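/- arXiv:2306.01871 — 5 statements merged into one kernel-verified Lean document; each statement's English description precedes it below -/
import Mathlib

section
/- Let t₀ < t_f, let v : ℝ → ℝ be differentiable on [t₀, t_f] with control u = v', let v_max ∈ ℝ and k₃ > 0. If −u(t) + k₃·( v_max − v(t) ) ≥ 0 for all t ∈ [t₀, t_f] and v(t₀) ≤ v_max, then v(t) ≤ v_max for all t ∈ [t₀, t_f]. -/
open Set

theorem mul_exp_le_of_deriv_right_add_mul_nonneg {b b' : ℝ → ℝ} {t₀ tf k : ℝ}
    (hb : ContinuousOn b (Icc t₀ tf))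
    (hb' : ∀ t ∈ Ico t₀ tf, HasDerivWithinAt b (b' t) (Ici t) t)
    (hcbf : ∀ t ∈ Ico t₀ tf, 0 ≤ b' t + k * b t) :
    ∀ t ∈ Icc t₀ tf, b t₀ * Real.exp (-k * (t - t₀)) ≤ b t := by
  intro t ht
  have hneg : -b t ≤ gronwallBound (-b t₀) (-k) 0 (t - t₀) :=
    le_gronwallBound_of_liminf_deriv_right_le (f := fun s ↦ -b s) (f' := fun s ↦ -b' s) hb.neg
      (fun s hs _ hr ↦ (hb' s hs).fun_neg.liminf_right_slope_le hr) le_rfl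
      (fun s hs ↦ by linarith [hcbf s hs]) t ht
  rw [gronwallBound_ε0] at hneg
  linarith

theorem nonneg_of_deriv_right_add_mul_nonneg {b b' : ℝ → ℝ} {t₀ tf k : ℝ}
    (hb : ContinuousOn b (Icc t₀ tf))
    (hb' : ∀ t ∈ Ico t₀ tf, HasDerivWithinAt b (b' t) (Ici t) t)
    (hcbf : ∀ t ∈ Ico t₀ tf, 0 ≤ b' t + k * b t) (h0 : 0 ≤ b t₀) :
    ∀ t ∈ Icc t₀ tf, 0 ≤ b t := fun t ht ↦
  (mul_nonneg h0 (Real.exp_nonneg _)).trans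
    (mul_exp_le_of_deriv_right_add_mul_nonneg hb hb' hcbf t ht)

theorem stmt_5_general {t₀ tf : ℝ} {v u : ℝ → ℝ} {vmax k₃ : ℝ}
    (hv : ContinuousOn v (Icc t₀ tf))
    (hv' : ∀ t ∈ Ico t₀ tf, HasDerivWithinAt v (u t) (Ici t) t)
    (hcbf : ∀ t ∈ Ico t₀ tf, 0 ≤ -u t + k₃ * (vmax - v t)) (h0 : v t₀ ≤ vmax) :
    ∀ t ∈ Icc t₀ tf, v t ≤ vmax := fun t ht ↦
  sub_nonneg.1 <| nonneg_of_deriv_right_add_mul_nonneg (b := fun s ↦ vmax - v s)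
    (continuousOn_const.sub hv) (fun s hs ↦ (hv' s hs).const_sub vmax) hcbf (sub_nonneg.2 h0) t ht

/-- Maximum speed constraint via the CBF `b₃ = v_max − v`. -/
theorem stmt_5 (t₀ tf : ℝ) (ht : t₀ < tf)
    (v u : ℝ → ℝ) (vmax k₃ : ℝ) (hk₃ : 0 < k₃)
    (hv : ∀ t ∈ Set.Icc t₀ tf, HasDerivAt v (u t) t)
    (hcbf : ∀ t ∈ Set.Icc t₀ tf, -u t + k₃ * (vmax - v t) ≥ 0)
    (h0 : v t₀ ≤ vmax) :
    ∀ t ∈ Set.Icc t₀ tf, v t ≤ vmax :=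
  stmt_5_general (HasDerivAt.continuousOn hv)
    (fun t ht ↦ (hv t (Ico_subset_Icc_self ht)).hasDerivWithinAt)
    (fun t ht ↦ hcbf t (Ico_subset_Icc_self ht)) h0
end

section
/- Let t₀ < t_f, let v : ℝ → ℝ be differentiable on [t₀, t_f] with control u = v', let v_min ∈ ℝ and k₄ > 0. If u(t) + k₄·( v(t) − v_min ) ≥ 0 for all t ∈ [t₀, t_f] and v(t₀) ≥ v_min, then v(t) ≥ v_min for all t ∈ [t₀, t_f]. -/
/-! Grönwall's inequality applied to `-b₄` shows that `b₄ = v - v_min` decays at most exponentially,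
`b₄ t ≥ b₄ t₀ * exp (-k₄ * (t - t₀))`, so it stays nonnegative once `b₄ t₀ ≥ 0`. -/

open Set

theorem mul_exp_le_of_mul_le_deriv_right {f f' : ℝ → ℝ} {δ K a b : ℝ}
    (hf : ContinuousOn f (Icc a b))
    (hf' : ∀ x ∈ Ico a b, HasDerivWithinAt f (f' x) (Ici x) x)
    (ha : δ ≤ f a) (bound : ∀ x ∈ Ico a b, K * f x ≤ f' x) :
    ∀ x ∈ Icc a b, δ * Real.exp (K * (x - a)) ≤ f x := by
  intro x hx
  have neg_le_gronwallBound : -f x ≤ gronwallBound (-δ) K 0 (x - a) :=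
    le_gronwallBound_of_liminf_deriv_right_le (f := fun y ↦ -f y) (f' := fun y ↦ -f' y)
      hf.neg (fun y hy _ ↦ (hf' y hy).neg.liminf_right_slope_le) (neg_le_neg ha)
      (fun y hy ↦ by linarith [bound y hy]) x hx
  rw [gronwallBound_ε0] at neg_le_gronwallBound
  linarith

theorem stmt_6_general {t₀ tf vmin k₄ : ℝ} {v u : ℝ → ℝ}
    (hv : ContinuousOn v (Icc t₀ tf))
    (hu : ∀ t ∈ Ico t₀ tf, HasDerivWithinAt v (u t) (Ici t) t)
    (hcbf : ∀ t ∈ Ico t₀ tf, 0 ≤ u t + k₄ * (v t - vmin))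
    (h0 : vmin ≤ v t₀) :
    ∀ t ∈ Icc t₀ tf, vmin ≤ v t := by
  intro t ht
  have decay : (v t₀ - vmin) * Real.exp (-k₄ * (t - t₀)) ≤ v t - vmin :=
    mul_exp_le_of_mul_le_deriv_right (f := fun s ↦ v s - vmin)
      (hv.sub continuousOn_const) (fun s hs ↦ (hu s hs).sub_const vmin) le_rfl
      (fun s hs ↦ by linarith [hcbf s hs]) t ht
  exact sub_nonneg.1 ((mul_nonneg (sub_nonneg.2 h0) (Real.exp_pos _).le).trans decay)

/-- Minimum speed constraint via the CBF `b₄ = v − v_min`. -/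
theorem stmt_6 (t₀ tf : ℝ) (ht : t₀ < tf)
    (v u : ℝ → ℝ) (vmin k₄ : ℝ) (hk₄ : 0 < k₄)
    (hv : ∀ t ∈ Set.Icc t₀ tf, HasDerivAt v (u t) t)
    (hcbf : ∀ t ∈ Set.Icc t₀ tf, u t + k₄ * (v t - vmin) ≥ 0)
    (h0 : v t₀ ≥ vmin) :
    ∀ t ∈ Set.Icc t₀ tf, v t ≥ vmin :=
  stmt_6_general (HasDerivAt.continuousOn hv)
    (fun t ht ↦ (hv t (Ico_subset_Icc_self ht)).hasDerivWithinAt)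
    (fun t ht ↦ hcbf t (Ico_subset_Icc_self ht)) h0
end

section
/- Let t_k < t_{k+1}, let x_i, x_p : ℝ → ℝ be twice differentiable on [t_k, t_{k+1}] with velocities v_i = x_i', v_p = x_p', suppose the control of CAV i is constant on the interval: v_i'(t) = u_i for all t ∈ [t_k, t_{k+1}], and let φ > 0, δ > 0, k₁ > 0 and box half-widths s_x ≥ 0, s_v ≥ 0. Assume: (i) |x_i(t) − x_i(t_k)| ≤ s_x, |v_i(t) − v_i(t_k)| ≤ s_v, |x_p(t) − x_p(t_k)| ≤ s_x and |v_p(t) − v_p(t_k)| ≤ s_v for all t in the interval; (ii) x_p(t_k) − x_i(t_k) − φ·v_i(t_k) − δ ≥ 0; and (iii) the event-triggered condition ( v_p(t_k) − s_v ) − ( v_i(t_k) + s_v ) − φ·u_i + k₁·( (x_p(t_k) − s_x) − (x_i(t_k) + s_x) − φ·(v_i(t_k) + s_v) − δ ) ≥ 0. Then the rear-end safety barrier b₁(t) = x_p(t) − x_i(t) − φ·v_i(t) − δ satisfies b₁(t) ≥ 0 for all t ∈ [t_k, t_{k+1}], i.e., x_p(t) − x_i(t) ≥ φ·v_i(t)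 + δ throughout the inter-event interval. -/
/-!
Along the double-integrator dynamics the barrier `b` has derivative `v_p - v_i - φ u`, and the CBF
condition says `b' + k b ≥ 0`. Grönwall's inequality for `-b` turns this into
`b(t) ≥ b(t₀) exp (-k (t - t₀))`, so a barrier that starts nonnegative stays nonnegative.
The left-hand side of the CBF condition is increasing in the state of the preceding vehicle and
decreasing in the state and the control of the following one, so its minimum over a box of states
is attained at a corner; the event-triggered condition is its nonnegativity there.
-/

open Set

section Comparison

variable {b b' : ℝ → ℝ} {k t₀ t₁ : ℝ}

theorem mul_exp_le_of_neg_mul_le_deriv_right (hb : ContinuousOn b (Icc t₀ t₁))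
    (hb' : ∀ t ∈ Ico t₀ t₁, HasDerivWithinAt b (b' t) (Ici t) t)
    (hbound : ∀ t ∈ Ico t₀ t₁, -k * b t ≤ b' t) :
    ∀ t ∈ Icc t₀ t₁, b t₀ * Real.exp (-k * (t - t₀)) ≤ b t := by
  intro t ht
  have hgronwall : -b t ≤ gronwallBound (-b t₀) (-k) 0 (t - t₀) :=
    le_gronwallBound_of_liminf_deriv_right_le (f := fun s ↦ -b s) (f' := fun s ↦ -b' s) hb.neg
      (fun s hs _ ↦ (hb' s hs).fun_neg.liminf_right_slope_le) le_rfl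
      (fun s hs ↦ by linarith [hbound s hs]) t ht
  rw [gronwallBound_ε0] at hgronwall
  linarith

theorem nonneg_of_neg_mul_le_deriv_right (hb : ContinuousOn b (Icc t₀ t₁))
    (hb' : ∀ t ∈ Ico t₀ t₁, HasDerivWithinAt b (b' t) (Ici t) t)
    (hbound : ∀ t ∈ Ico t₀ t₁, -k * b t ≤ b' t) (h₀ : 0 ≤ b t₀) :
    ∀ t ∈ Icc t₀ t₁, 0 ≤ b t := fun t ht ↦
  (mul_nonneg h₀ (Real.exp_nonneg _)).trans
    (mul_exp_le_of_neg_mul_le_deriv_right hb hb' hbound t ht)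

end Comparison

/-- The rear-end safety barrier `b₁`, as a function of the positions `xp`, `xi` of the preceding and
the following vehicle and of the velocity `vi` of the latter. -/
def rearEndBarrier (φ δ xp xi vi : ℝ) : ℝ :=
  xp - xi - φ * vi - δ

/-- The left-hand side `b₁' + k b₁` of the CBF condition, with linear class-K function `y ↦ k y`.
The derivative `b₁'` is expressed through the velocities `vp`, `vi` and the control `u = vi'`. -/
def rearEndCBF (φ δ k xp vp xi vi u : ℝ) : ℝ :=
  vp - vi - φ * u + k * rearEndBarrier φ δ xp xi vi

theorem rearEndBarrier_nonneg_iff {φ δ xp xi vi : ℝ} :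
    0 ≤ rearEndBarrier φ δ xp xi vi ↔ φ * vi + δ ≤ xp - xi := by
  rw [rearEndBarrier, sub_sub, sub_nonneg]

theorem rearEndBarrier_le_rearEndBarrier {φ δ xp₁ xp₂ xi₁ xi₂ vi₁ vi₂ : ℝ} (hφ : 0 ≤ φ)
    (hxp : xp₁ ≤ xp₂) (hxi : xi₂ ≤ xi₁) (hvi : vi₂ ≤ vi₁) :
    rearEndBarrier φ δ xp₁ xi₁ vi₁ ≤ rearEndBarrier φ δ xp₂ xi₂ vi₂ := by
  unfold rearEndBarrier
  gcongr

theorem rearEndCBF_le_rearEndCBF {φ δ k xp₁ xp₂ vp₁ vp₂ xi₁ xi₂ vi₁ vi₂ u₁ u₂ : ℝ}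
    (hφ : 0 ≤ φ) (hk : 0 ≤ k) (hxp : xp₁ ≤ xp₂) (hvp : vp₁ ≤ vp₂)
    (hxi : xi₂ ≤ xi₁) (hvi : vi₂ ≤ vi₁) (hu : u₂ ≤ u₁) :
    rearEndCBF φ δ k xp₁ vp₁ xi₁ vi₁ u₁ ≤ rearEndCBF φ δ k xp₂ vp₂ xi₂ vi₂ u₂ := by
  have hbarrier := rearEndBarrier_le_rearEndBarrier (δ := δ) hφ hxp hxi hvi
  unfold rearEndCBF
  gcongr

section Trajectory

variable {xi xp vi vp u : ℝ → ℝ} {φ δ k t₀ t₁ : ℝ}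

theorem hasDerivWithinAt_rearEndBarrier {s : Set ℝ} {t xp' xi' vi' : ℝ}
    (hxp : HasDerivWithinAt xp xp' s t) (hxi : HasDerivWithinAt xi xi' s t)
    (hvi : HasDerivWithinAt vi vi' s t) :
    HasDerivWithinAt (fun τ ↦ rearEndBarrier φ δ (xp τ) (xi τ) (vi τ)) (xp' - xi' - φ * vi') s t :=
  ((hxp.sub hxi).sub (hvi.const_mul φ)).sub_const δ

theorem rearEndBarrier_nonneg_of_rearEndCBF_nonneg
    (hxi : ∀ t ∈ Icc t₀ t₁, HasDerivWithinAt xi (vi t) (Icc t₀ t₁) t)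
    (hxp : ∀ t ∈ Icc t₀ t₁, HasDerivWithinAt xp (vp t) (Icc t₀ t₁) t)
    (hvi : ∀ t ∈ Icc t₀ t₁, HasDerivWithinAt vi (u t) (Icc t₀ t₁) t)
    (hcbf : ∀ t ∈ Icc t₀ t₁, 0 ≤ rearEndCBF φ δ k (xp t) (vp t) (xi t) (vi t) (u t))
    (h₀ : 0 ≤ rearEndBarrier φ δ (xp t₀) (xi t₀) (vi t₀)) :
    ∀ t ∈ Icc t₀ t₁, 0 ≤ rearEndBarrier φ δ (xp t) (xi t) (vi t) := by
  have hderiv : ∀ t ∈ Icc t₀ t₁,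
      HasDerivWithinAt (fun τ ↦ rearEndBarrier φ δ (xp τ) (xi τ) (vi τ))
        (vp t - vi t - φ * u t) (Icc t₀ t₁) t := fun t ht ↦
    hasDerivWithinAt_rearEndBarrier (hxp t ht) (hxi t ht) (hvi t ht)
  refine nonneg_of_neg_mul_le_deriv_right (k := k)
    (fun t ht ↦ (hderiv t ht).continuousWithinAt)
    (fun t ht ↦ (hderiv t (Ico_subset_Icc_self ht)).mono_of_mem_nhdsWithin
      (Icc_mem_nhdsGE_of_mem ht)) (fun t ht ↦ ?_) h₀
  have hcbf_t := hcbf t (Ico_subset_Icc_self ht)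
  unfold rearEndCBF at hcbf_t
  linarith

/-- The capital letters denote the worst-case corner of the event-trigger box, at which `rearEndCBF`
is smallest: `Xp = x_p(t_k) - s_x`, `Vp = v_p(t_k) - s_v`, `Xi = x_i(t_k) + s_x`,
`Vi = v_i(t_k) + s_v`; for a control held constant, `U` is its value. -/
theorem stmt_9_general {Xp Vp Xi Vi U : ℝ} (hφ : 0 ≤ φ) (hk : 0 ≤ k)
    (hxi : ∀ t ∈ Icc t₀ t₁, HasDerivWithinAt xi (vi t) (Icc t₀ t₁) t)
    (hxp : ∀ t ∈ Icc t₀ t₁, HasDerivWithinAt xp (vp t) (Icc t₀ t₁) t)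
    (hvi : ∀ t ∈ Icc t₀ t₁, HasDerivWithinAt vi (u t) (Icc t₀ t₁) t)
    (hXp : ∀ t ∈ Icc t₀ t₁, Xp ≤ xp t) (hVp : ∀ t ∈ Icc t₀ t₁, Vp ≤ vp t)
    (hXi : ∀ t ∈ Icc t₀ t₁, xi t ≤ Xi) (hVi : ∀ t ∈ Icc t₀ t₁, vi t ≤ Vi)
    (hU : ∀ t ∈ Icc t₀ t₁, u t ≤ U)
    (hcorner : 0 ≤ rearEndCBF φ δ k Xp Vp Xi Vi U)
    (h₀ : 0 ≤ rearEndBarrier φ δ (xp t₀) (xi t₀) (vi t₀)) :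
    ∀ t ∈ Icc t₀ t₁, 0 ≤ rearEndBarrier φ δ (xp t) (xi t) (vi t) :=
  rearEndBarrier_nonneg_of_rearEndCBF_nonneg hxi hxp hvi
    (fun t ht ↦ hcorner.trans <| rearEndCBF_le_rearEndCBF hφ hk (hXp t ht) (hVp t ht)
      (hXi t ht) (hVi t ht) (hU t ht)) h₀

end Trajectory

/-- Event-triggered rear-end safety: if the states stay in boxes of half-widths
`(s_x, s_v)` around their values at the event time `t_k`, the barrier is
nonnegative at `t_k`, and the worst-case (event-triggered) CBF condition holds,
then rear-end safety holds throughout the inter-event interval. -/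
theorem stmt_9 (tk tk1 : ℝ) (ht : tk < tk1)
    (xi xp vi vp : ℝ → ℝ) (ui : ℝ) (φ δ k₁ sx sv : ℝ)
    (hφ : 0 < φ) (hδ : 0 < δ) (hk₁ : 0 < k₁) (hsx : 0 ≤ sx) (hsv : 0 ≤ sv)
    (hxi : ∀ t ∈ Set.Icc tk tk1, HasDerivAt xi (vi t) t)
    (hxp : ∀ t ∈ Set.Icc tk tk1, HasDerivAt xp (vp t) t)
    (hvi : ∀ t ∈ Set.Icc tk tk1, HasDerivAt vi ui t)
    (hboxxi : ∀ t ∈ Set.Icc tk tk1, |xi t - xi tk| ≤ sx)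
    (hboxvi : ∀ t ∈ Set.Icc tk tk1, |vi t - vi tk| ≤ sv)
    (hboxxp : ∀ t ∈ Set.Icc tk tk1, |xp t - xp tk| ≤ sx)
    (hboxvp : ∀ t ∈ Set.Icc tk tk1, |vp t - vp tk| ≤ sv)
    (h0 : xp tk - xi tk - φ * vi tk - δ ≥ 0)
    (hcond : (vp tk - sv) - (vi tk + sv) - φ * ui
      + k₁ * ((xp tk - sx) - (xi tk + sx) - φ * (vi tk + sv) - δ) ≥ 0) :
    ∀ t ∈ Set.Icc tk tk1, xp t - xi t ≥ φ * vi t + δ := fun t h ↦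
  rearEndBarrier_nonneg_iff.1 <| stmt_9_general hφ.le hk₁.le
    (fun s hs ↦ (hxi s hs).hasDerivWithinAt) (fun s hs ↦ (hxp s hs).hasDerivWithinAt)
    (fun s hs ↦ (hvi s hs).hasDerivWithinAt)
    (fun s hs ↦ sub_le_of_abs_sub_le_left (hboxxp s hs))
    (fun s hs ↦ sub_le_of_abs_sub_le_left (hboxvp s hs))
    (fun s hs ↦ sub_le_iff_le_add'.1 (le_of_abs_le (hboxxi s hs)))
    (fun s hs ↦ sub_le_iff_le_add'.1 (le_of_abs_le (hboxvi s hs)))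
    (fun _ _ ↦ le_rfl) hcond h0 t h
end

section
/- Let t_k < t_{k+1}, let v : ℝ → ℝ be differentiable on [t_k, t_{k+1}] with constant control: v'(t) = u for all t ∈ [t_k, t_{k+1}], and let v_max ∈ ℝ, k₃ > 0 and s_v ≥ 0. Assume |v(t) − v(t_k)| ≤ s_v for all t in the interval, v(t_k) ≤ v_max, and the event-triggered condition −u + k₃·( v_max − v(t_k) − s_v ) ≥ 0. Then v(t) ≤ v_max for all t ∈ [t_k, t_{k+1}]. -/
/-!
The sign of the worst-case margin `vmax - v tk - sv` decides. If it is nonnegative, the box around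
`v tk` already lies below `vmax`. If it is negative, the class-K term `γ (vmax - v tk - sv)` is
nonpositive, so the event-triggered condition forces a nonpositive acceleration and `v` never
exceeds `v tk`.
-/

open Set

theorem le_left_of_deriv_right_nonpos {f f' : ℝ → ℝ} {a b : ℝ} (hf : ContinuousOn f (Icc a b))
    (hf' : ∀ x ∈ Ico a b, HasDerivWithinAt f (f' x) (Ici x) x) (hneg : ∀ x ∈ Ico a b, f' x ≤ 0) :
    ∀ x ∈ Icc a b, f x ≤ f a :=
  fun _ hx ↦ image_le_of_deriv_right_le_deriv_boundary (B := fun _ ↦ f a) hf hf' le_rfl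
    continuousOn_const (fun x _ ↦ hasDerivWithinAt_const x (Ici x) (f a)) hneg hx

theorem stmt_11_general {tk tk1 vmax sv : ℝ} {v u γ : ℝ → ℝ} (hγ : ∀ r < 0, γ r ≤ 0)
    (hcont : ContinuousOn v (Icc tk tk1))
    (hv : ∀ t ∈ Ico tk tk1, HasDerivWithinAt v (u t) (Ici t) t)
    (hbox : ∀ t ∈ Icc tk tk1, v t - v tk ≤ sv) (h0 : v tk ≤ vmax)
    (hcond : ∀ t ∈ Ico tk tk1, 0 ≤ -u t + γ (vmax - v tk - sv)) :
    ∀ t ∈ Icc tk tk1, v t ≤ vmax := by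
  intro t ht
  rcases le_or_gt 0 (vmax - v tk - sv) with hmargin | hmargin
  · linarith [hbox t ht]
  · have hu : ∀ τ ∈ Ico tk tk1, u τ ≤ 0 := fun τ hτ ↦ by
      linarith [hcond τ hτ, hγ _ hmargin]
    exact (le_left_of_deriv_right_nonpos hcont hv hu t ht).trans h0

/-- Event-triggered maximum-speed constraint. -/
theorem stmt_11 (tk tk1 : ℝ) (ht : tk < tk1)
    (v : ℝ → ℝ) (u vmax k₃ sv : ℝ) (hk₃ : 0 < k₃) (hsv : 0 ≤ sv)
    (hv : ∀ t ∈ Set.Icc tk tk1, HasDerivAt v u t)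
    (hbox : ∀ t ∈ Set.Icc tk tk1, |v t - v tk| ≤ sv)
    (h0 : v tk ≤ vmax)
    (hcond : -u + k₃ * (vmax - v tk - sv) ≥ 0) :
    ∀ t ∈ Set.Icc tk tk1, v t ≤ vmax :=
  stmt_11_general (u := fun _ ↦ u) (γ := (k₃ * ·))
    (fun _ hr ↦ (mul_neg_of_pos_of_neg hk₃ hr).le) (HasDerivAt.continuousOn hv)
    (fun t ht ↦ (hv t (Ico_subset_Icc_self ht)).hasDerivWithinAt)
    (fun t ht ↦ le_of_abs_le (hbox t ht)) h0 (fun _ _ ↦ hcond)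
end

section
/- Let t_k < t_{k+1}, let v : ℝ → ℝ be differentiable on [t_k, t_{k+1}] with constant control: v'(t) = u for all t ∈ [t_k, t_{k+1}], and let v_min ∈ ℝ, k₄ > 0 and s_v ≥ 0. Assume |v(t) − v(t_k)| ≤ s_v for all t in the interval, v(t_k) ≥ v_min, and the event-triggered condition u + k₄·( v(t_k) − s_v − v_min ) ≥ 0. Then v(t) ≥ v_min for all t ∈ [t_k, t_{k+1}]. -/
/-!
Let `m` be the lower bound that the event trigger guarantees for the barrier `b` between events. If
`m ≥ 0`, then `b ≥ 0`. If `m ≤ 0`, then `γ m ≤ 0`, so the condition `b' + γ m ≥ 0` forces `b' ≥ 0`,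
and the barrier cannot fall below its initial value.
-/

open Set

theorem nonneg_of_hasDerivWithinAt_add_nonneg {D : Set ℝ} (hD : Convex ℝ D) {a m : ℝ}
    {b b' γ : ℝ → ℝ} (hγ : ∀ s ≤ 0, γ s ≤ 0) (hb : ContinuousOn b D)
    (hb' : ∀ t ∈ interior D, HasDerivWithinAt b (b' t) (interior D) t)
    (hm : ∀ t ∈ D, m ≤ b t) (hcond : ∀ t ∈ interior D, 0 ≤ b' t + γ m)
    (ha : a ∈ D) (hba : 0 ≤ b a) {t : ℝ} (ht : t ∈ D) (hat : a ≤ t) : 0 ≤ b t := by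
  rcases le_total 0 m with hm_nonneg | hm_nonpos
  · exact hm_nonneg.trans (hm t ht)
  · have hb'_nonneg : ∀ s ∈ interior D, 0 ≤ b' s := fun s hs ↦ by
      linarith [hcond s hs, hγ m hm_nonpos]
    have hmono : MonotoneOn b D := monotoneOn_of_hasDerivWithinAt_nonneg hD hb hb' hb'_nonneg
    exact hba.trans (hmono ha ht hat)

theorem stmt_12_general {tk tk1 vmin sv : ℝ} {v u γ : ℝ → ℝ} (hγ : ∀ s ≤ 0, γ s ≤ 0)
    (hv : ∀ t ∈ Icc tk tk1, HasDerivWithinAt v (u t) (Icc tk tk1) t)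
    (hbox : ∀ t ∈ Icc tk tk1, v tk - sv ≤ v t) (h0 : vmin ≤ v tk)
    (hcond : ∀ t ∈ Ioo tk tk1, 0 ≤ u t + γ (v tk - sv - vmin)) :
    ∀ t ∈ Icc tk tk1, vmin ≤ v t := by
  intro t ht
  have hb : ∀ s ∈ Icc tk tk1, HasDerivWithinAt (fun s ↦ v s - vmin) (u s) (Icc tk tk1) s :=
    fun s hs ↦ (hv s hs).sub_const vmin
  exact sub_nonneg.mp <| nonneg_of_hasDerivWithinAt_add_nonneg (convex_Icc tk tk1) hγ
    (fun s hs ↦ (hb s hs).continuousWithinAt)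
    (fun s hs ↦ (hb s (interior_subset hs)).mono interior_subset)
    (fun s hs ↦ sub_le_sub_right (hbox s hs) vmin) (by rwa [interior_Icc])
    (left_mem_Icc.mpr (ht.1.trans ht.2)) (sub_nonneg.mpr h0) ht ht.1

/-- Event-triggered minimum-speed constraint. -/
theorem stmt_12 (tk tk1 : ℝ) (ht : tk < tk1)
    (v : ℝ → ℝ) (u vmin k₄ sv : ℝ) (hk₄ : 0 < k₄) (hsv : 0 ≤ sv)
    (hv : ∀ t ∈ Set.Icc tk tk1, HasDerivAt v u t)
    (hbox : ∀ t ∈ Set.Icc tk tk1, |v t - v tk| ≤ sv)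
    (h0 : v tk ≥ vmin)
    (hcond : u + k₄ * (v tk - sv - vmin) ≥ 0) :
    ∀ t ∈ Set.Icc tk tk1, v t ≥ vmin :=
  stmt_12_general (fun _ hs ↦ mul_nonpos_of_nonneg_of_nonpos hk₄.le hs)
    (fun t ht ↦ (hv t ht).hasDerivWithinAt)
    (fun t ht ↦ sub_le_of_abs_sub_le_left (hbox t ht)) h0 (fun _ _ ↦ hcond)
end
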